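/- Let v1, v2, v3, v4 (listed counterclockwise) be the vertices of a convex quadrilateral Q = conv{v1, v2, v3, v4} in ℝ², let mij be the midpoint of vi and vj, and let c = (v1 + v2 + v3 + v4)/4. Then the four closed subquadrilaterals conv{v1, m12, c, m41}, conv{m12, v2, m23, c}, conv{c, m23, v3, m34}, conv{m41, c, m34, v4} of the red refinement of Q have pairwise disjoint interiors and their union equals Q; in particular the sum of their areas equals the area of Q. -/

import Mathlib

noncomputable section

open MeasureTheory

/-- The Euclidean plane. -/
abbrev E2 : Type := EuclideanSpace ℝ (Fin 2)

/-- The points `a`, `b`, `c` are in counterclockwise order (positively oriented). -/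
def Ccw (a b c : E2) : Prop :=
  0 < (b 0 - a 0) * (c 1 - a 1) - (b 1 - a 1) * (c 0 - a 0)

/-- The (listed) points `a, b, c, d` are the vertices of a convex quadrilateral: they are
in convex position, with no three of them collinear. -/
def ConvexQuad (a b c d : E2) : Prop :=
  (¬ Collinear ℝ ({a, b, c} : Set E2) ∧ ¬ Collinear ℝ ({a, b, d} : Set E2) ∧
    ¬ Collinear ℝ ({a, c, d} : Set E2) ∧ ¬ Collinear ℝ ({b, c, d} : Set E2)) ∧
  (a ∉ convexHull ℝ ({b, c, d} : Set E2) ∧ b ∉ convexHull ℝ ({a, c, d} : Set E2) ∧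
    c ∉ convexHull ℝ ({a, b, d} : Set E2) ∧ d ∉ convexHull ℝ ({a, b, c} : Set E2))

/-- Twice the signed area of the triangle `a b p`. -/
def SA (a b p : E2) : ℝ := (b 0 - a 0) * (p 1 - a 1) - (b 1 - a 1) * (p 0 - a 0)

lemma SA_convex_nonneg (a b : E2) : Convex ℝ {p : E2 | 0 ≤ SA a b p} := by
  intro x hx y hy s t hs ht hst
  simp only [Set.mem_ofPred_eq] at *
  have : SA a b (s • x + t • y) = s * SA a b x + t * SA a b y := by
    simp only [SA, PiLp.add_apply, PiLp.smul_apply, smul_eq_mul]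
    obtain rfl : s = 1 - t := by linarith
    ring
  rw [this]; positivity

lemma SA_swap (a b p : E2) : SA b a p = - SA a b p := by
  simp only [SA]; ring

lemma triangle_mem (a b c p : E2) (h : 0 < SA a b c) (h1 : 0 ≤ SA a b p) (h2 : 0 ≤ SA b c p)
    (h3 : 0 ≤ SA c a p) : p ∈ convexHull ℝ ({a, b, c} : Set E2) := by
  have key : p = (SA b c p / SA a b c) • a + (SA c a p / SA a b c) • b
      + (SA a b p / SA a b c) • c := by
    ext i
    simp only [PiLp.add_apply, PiLp.smul_apply, smul_eq_mul]
    field_simp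
    fin_cases i <;> simp [SA] <;> ring
  have hsum : SA b c p / SA a b c + SA c a p / SA a b c + SA a b p / SA a b c = 1 := by
    field_simp
    simp only [SA]; ring
  rw [key]
  have hc := convex_convexHull ℝ ({a, b, c} : Set E2)
  have ha : a ∈ convexHull ℝ ({a, b, c} : Set E2) := subset_convexHull _ _ (by simp)
  have hb : b ∈ convexHull ℝ ({a, b, c} : Set E2) := subset_convexHull _ _ (by simp)
  have hcc : c ∈ convexHull ℝ ({a, b, c} : Set E2) := subset_convexHull _ _ (by simp)
  have hm := hc.sum_mem (t := Finset.univ)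
    (w := ![SA b c p / SA a b c, SA c a p / SA a b c, SA a b p / SA a b c])
    (z := ![a, b, c])
    (by intro i _; fin_cases i <;> simp <;> positivity)
    (by simpa [Fin.sum_univ_three] using hsum)
    (by intro i _; fin_cases i <;> simp <;> assumption)
  simpa [Fin.sum_univ_three] using hm

lemma quad_mem (a b c d p : E2) (h1 : 0 < SA a b c) (h2 : 0 < SA c d a)
    (p1 : 0 ≤ SA a b p) (p2 : 0 ≤ SA b c p) (p3 : 0 ≤ SA c d p) (p4 : 0 ≤ SA d a p) :
    p ∈ convexHull ℝ ({a, b, c, d} : Set E2) := by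
  rcases le_total 0 (SA c a p) with h | h
  · refine convexHull_mono ?_ (triangle_mem a b c p h1 p1 p2 h)
    intro x; simp; tauto
  · refine convexHull_mono ?_ (triangle_mem c d a p h2 p3 p4 (by rw [SA_swap]; linarith))
    intro x; simp; tauto

lemma hull_sub (a b x y z w : E2) (hx : 0 ≤ SA a b x) (hy : 0 ≤ SA a b y) (hz : 0 ≤ SA a b z)
    (hw : 0 ≤ SA a b w) : convexHull ℝ ({x, y, z, w} : Set E2) ⊆ {p | 0 ≤ SA a b p} := by
  refine convexHull_min ?_ (SA_convex_nonneg a b)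
  rintro p (rfl | rfl | rfl | rfl) <;> assumption

/-- The line `SA a b p = 0`. -/
def lineSub (a b : E2) : AffineSubspace ℝ E2 where
  carrier := {p | SA a b p = 0}
  smul_vsub_vadd_mem' := by
    intro t x y z hx hy hz
    simp only [Set.mem_ofPred_eq, vsub_eq_sub, vadd_eq_add] at *
    have : SA a b (t • (x - y) + z) = t * (SA a b x - SA a b y) + SA a b z := by
      simp only [SA, PiLp.add_apply, PiLp.smul_apply, PiLp.sub_apply, smul_eq_mul]; ring
    rw [this, hx, hy, hz]; ring

lemma null_inter (a b q : E2) (hq : SA a b q ≠ 0) (A B : Set E2)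
    (hA : A ⊆ {p | 0 ≤ SA a b p}) (hB : B ⊆ {p | 0 ≤ SA b a p}) : volume (A ∩ B) = 0 := by
  have hs : lineSub a b ≠ ⊤ := by
    intro h
    have : q ∈ lineSub a b := by rw [h]; trivial
    exact hq this
  refine measure_mono_null ?_ (Measure.addHaar_affineSubspace volume _ hs)
  rintro p ⟨h1, h2⟩
  have h1 := hA h1
  have h2 := hB h2
  simp only [Set.mem_ofPred_eq] at h1 h2
  rw [SA_swap] at h2
  show SA a b p = 0
  linarith

lemma disj_int (A B : Set E2) (h : volume (A ∩ B) = 0) : Disjoint (interior A) (interior B) := by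
  rw [Set.disjoint_iff_inter_eq_empty]
  refine (isOpen_interior.inter isOpen_interior).eq_empty_of_measure_zero (μ := volume) ?_
  exact measure_mono_null (Set.inter_subset_inter interior_subset interior_subset) h

/-- The four closed subquadrilaterals of the red refinement of a convex quadrilateral
`Q = conv{v1, v2, v3, v4}` (vertices listed counterclockwise) have pairwise disjoint
interiors and their union is `Q`; in particular their areas (two-dimensional Lebesgue
measures) sum to the area of `Q`. -/
theorem stmt9 (v1 v2 v3 v4 m12 m23 m34 m41 c : E2)
    (hquad : ConvexQuad v1 v2 v3 v4)
    (hccw : Ccw v1 v2 v3 ∧ Ccw v2 v3 v4 ∧ Ccw v3 v4 v1 ∧ Ccw v4 v1 v2)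
    (hm12 : m12 = midpoint ℝ v1 v2) (hm23 : m23 = midpoint ℝ v2 v3)
    (hm34 : m34 = midpoint ℝ v3 v4) (hm41 : m41 = midpoint ℝ v4 v1)
    (hc : c = (4 : ℝ)⁻¹ • (v1 + v2 + v3 + v4))
    (Q1 Q2 Q3 Q4 : Set E2)
    (hQ1 : Q1 = convexHull ℝ ({v1, m12, c, m41} : Set E2))
    (hQ2 : Q2 = convexHull ℝ ({m12, v2, m23, c} : Set E2))
    (hQ3 : Q3 = convexHull ℝ ({c, m23, v3, m34} : Set E2))
    (hQ4 : Q4 = convexHull ℝ ({m41, c, m34, v4} : Set E2)) :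
    (Disjoint (interior Q1) (interior Q2) ∧ Disjoint (interior Q1) (interior Q3) ∧
      Disjoint (interior Q1) (interior Q4) ∧ Disjoint (interior Q2) (interior Q3) ∧
      Disjoint (interior Q2) (interior Q4) ∧ Disjoint (interior Q3) (interior Q4)) ∧
    Q1 ∪ Q2 ∪ Q3 ∪ Q4 = convexHull ℝ ({v1, v2, v3, v4} : Set E2) ∧
    volume Q1 + volume Q2 + volume Q3 + volume Q4 =
      volume (convexHull ℝ ({v1, v2, v3, v4} : Set E2)) := by
  obtain ⟨c1, c2, c3, c4⟩ := hccw
  replace c1 : 0 < SA v1 v2 v3 := c1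
  replace c2 : 0 < SA v2 v3 v4 := c2
  replace c3 : 0 < SA v3 v4 v1 := c3
  replace c4 : 0 < SA v4 v1 v2 := c4
  have tac0 : ∀ a b p : E2, SA a b p =
    (b 0 - a 0) * (p 1 - a 1) - (b 1 - a 1) * (p 0 - a 0) := fun _ _ _ => rfl
  have e12 : ∀ i, m12 i = (v1 i + v2 i) / 2 := by
    intro i; rw [hm12, midpoint_eq_smul_add]; simp; ring
  have e23 : ∀ i, m23 i = (v2 i + v3 i) / 2 := by
    intro i; rw [hm23, midpoint_eq_smul_add]; simp; ring
  have e34 : ∀ i, m34 i = (v3 i + v4 i) / 2 := by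
    intro i; rw [hm34, midpoint_eq_smul_add]; simp; ring
  have e41 : ∀ i, m41 i = (v4 i + v1 i) / 2 := by
    intro i; rw [hm41, midpoint_eq_smul_add]; simp; ring
  have ec : ∀ i, c i = (v1 i + v2 i + v3 i + v4 i) / 4 := by
    intro i; rw [hc]; simp; ring
  clear hm12 hm23 hm34 hm41 hc hquad
  have s10 : Q1 ⊆ {p | 0 ≤ SA m12 m34 p} := by
    rw [hQ1]
    apply hull_sub <;> (simp only [SA, e12, e23, e34, e41, ec] at *; linarith)
  have s11 : Q1 ⊆ {p | 0 ≤ SA m23 m41 p} := by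
    rw [hQ1]
    apply hull_sub <;> (simp only [SA, e12, e23, e34, e41, ec] at *; linarith)
  have s20 : Q2 ⊆ {p | 0 ≤ SA m34 m12 p} := by
    rw [hQ2]
    apply hull_sub <;> (simp only [SA, e12, e23, e34, e41, ec] at *; linarith)
  have s21 : Q2 ⊆ {p | 0 ≤ SA m23 m41 p} := by
    rw [hQ2]
    apply hull_sub <;> (simp only [SA, e12, e23, e34, e41, ec] at *; linarith)
  have s30 : Q3 ⊆ {p | 0 ≤ SA m34 m12 p} := by
    rw [hQ3]
    apply hull_sub <;> (simp only [SA, e12, e23, e34, e41, ec] at *; linarith)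
  have s31 : Q3 ⊆ {p | 0 ≤ SA m41 m23 p} := by
    rw [hQ3]
    apply hull_sub <;> (simp only [SA, e12, e23, e34, e41, ec] at *; linarith)
  have s40 : Q4 ⊆ {p | 0 ≤ SA m12 m34 p} := by
    rw [hQ4]
    apply hull_sub <;> (simp only [SA, e12, e23, e34, e41, ec] at *; linarith)
  have s41 : Q4 ⊆ {p | 0 ≤ SA m41 m23 p} := by
    rw [hQ4]
    apply hull_sub <;> (simp only [SA, e12, e23, e34, e41, ec] at *; linarith)
  have hf : SA m12 m34 v1 ≠ 0 := by
    apply ne_of_gt; simp only [SA, e12, e23, e34, e41, ec] at *; linarith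
  have hg : SA m41 m23 v4 ≠ 0 := by
    apply ne_of_gt; simp only [SA, e12, e23, e34, e41, ec] at *; linarith
  have n12 := null_inter _ _ _ hf _ _ s10 s20
  have n13 := null_inter _ _ _ hf _ _ s10 s30
  have n42 := null_inter _ _ _ hf _ _ s40 s20
  have n43 := null_inter _ _ _ hf _ _ s40 s30
  have n41 := null_inter _ _ _ hg _ _ s41 s11
  have n32 := null_inter _ _ _ hg _ _ s31 s21
  have n14 : volume (Q1 ∩ Q4) = 0 := by rwa [Set.inter_comm]
  have n23 : volume (Q2 ∩ Q3) = 0 := by rwa [Set.inter_comm]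
  have n24 : volume (Q2 ∩ Q4) = 0 := by rwa [Set.inter_comm]
  have n34 : volume (Q3 ∩ Q4) = 0 := by rwa [Set.inter_comm]
  have hU : Q1 ∪ Q2 ∪ Q3 ∪ Q4 = convexHull ℝ ({v1, v2, v3, v4} : Set E2) := by
    apply Set.Subset.antisymm
    · have H : ∀ x y z w : E2, (∀ q ∈ ({x, y, z, w} : Set E2),
          0 ≤ SA v1 v2 q ∧ 0 ≤ SA v2 v3 q ∧ 0 ≤ SA v3 v4 q ∧ 0 ≤ SA v4 v1 q) →
          convexHull ℝ ({x, y, z, w} : Set E2) ⊆ convexHull ℝ ({v1, v2, v3, v4} : Set E2) := by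
        intro x y z w h p hp
        have hx := h x (by simp)
        have hy := h y (by simp)
        have hz := h z (by simp)
        have hw := h w (by simp)
        exact quad_mem _ _ _ _ _ c1 c3
          (hull_sub _ _ _ _ _ _ hx.1 hy.1 hz.1 hw.1 hp)
          (hull_sub _ _ _ _ _ _ hx.2.1 hy.2.1 hz.2.1 hw.2.1 hp)
          (hull_sub _ _ _ _ _ _ hx.2.2.1 hy.2.2.1 hz.2.2.1 hw.2.2.1 hp)
          (hull_sub _ _ _ _ _ _ hx.2.2.2 hy.2.2.2 hz.2.2.2 hw.2.2.2 hp)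
      clear s10 s11 s20 s21 s30 s31 s40 s41 hf hg
      rw [hQ1, hQ2, hQ3, hQ4]
      refine Set.union_subset (Set.union_subset (Set.union_subset ?_ ?_) ?_) ?_ <;>
        (apply H; rintro q (rfl | rfl | rfl | rfl) <;> refine ⟨?_, ?_, ?_, ?_⟩ <;>
          (simp only [SA, e12, e23, e34, e41, ec] at c1 c2 c3 c4 ⊢; linarith))
    · intro p hp
      have b1 : 0 ≤ SA v1 v2 p := by
        refine hull_sub _ _ _ _ _ _ ?_ ?_ ?_ ?_ hp <;>
          (simp only [SA] at c1 c2 c3 c4 ⊢; linarith)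
      have b2 : 0 ≤ SA v2 v3 p := by
        refine hull_sub _ _ _ _ _ _ ?_ ?_ ?_ ?_ hp <;>
          (simp only [SA] at c1 c2 c3 c4 ⊢; linarith)
      have b3 : 0 ≤ SA v3 v4 p := by
        refine hull_sub _ _ _ _ _ _ ?_ ?_ ?_ ?_ hp <;>
          (simp only [SA] at c1 c2 c3 c4 ⊢; linarith)
      have b4 : 0 ≤ SA v4 v1 p := by
        refine hull_sub _ _ _ _ _ _ ?_ ?_ ?_ ?_ hp <;>
          (simp only [SA] at c1 c2 c3 c4 ⊢; linarith)
      simp only [Set.mem_union]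
      rcases le_total 0 (SA m12 m34 p) with f | f <;> rcases le_total 0 (SA m41 m23 p) with g | g
      · right
        rw [hQ4]
        apply quad_mem <;>
          (simp only [SA, e12, e23, e34, e41, ec] at c1 c2 c3 c4 b1 b2 b3 b4 f g ⊢; linarith)
      · left; left; left
        rw [hQ1]
        apply quad_mem <;>
          (simp only [SA, e12, e23, e34, e41, ec] at c1 c2 c3 c4 b1 b2 b3 b4 f g ⊢; linarith)
      · left; right
        rw [hQ3]
        apply quad_mem <;>
          (simp only [SA, e12, e23, e34, e41, ec] at c1 c2 c3 c4 b1 b2 b3 b4 f g ⊢; linarith)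
      · left; left; right
        rw [hQ2]
        apply quad_mem <;>
          (simp only [SA, e12, e23, e34, e41, ec] at c1 c2 c3 c4 b1 b2 b3 b4 f g ⊢; linarith)
  refine ⟨⟨disj_int _ _ n12, disj_int _ _ n13, disj_int _ _ n14, disj_int _ _ n23,
    disj_int _ _ n24, disj_int _ _ n34⟩, hU, ?_⟩
  have m2 : NullMeasurableSet Q2 volume := by
    rw [hQ2]; exact (convex_convexHull ℝ _).nullMeasurableSet _
  have m3 : NullMeasurableSet Q3 volume := by
    rw [hQ3]; exact (convex_convexHull ℝ _).nullMeasurableSet _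
  have m4 : NullMeasurableSet Q4 volume := by
    rw [hQ4]; exact (convex_convexHull ℝ _).nullMeasurableSet _
  rw [← hU, measure_union₀ m4, measure_union₀ m3, measure_union₀ m2 n12]
  · exact AEDisjoint.union_left n13 n23
  · exact AEDisjoint.union_left (AEDisjoint.union_left n14 n24) n34
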